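/- Let (y_n)_{n=k-1}^{k+3} \subset \mathbb{Q}\setminus\{-1,1\} satisfy y_{n+1} + y_{n-1} = (a_n + b_n y_n)/(1 - y_n^2), where k is sufficiently large (all quantities in the definition of \epsilon_k are finite and nonzero) and the right-hand side is irreducible. Fix an absolute value |\cdot|_p (p \le \infty) and \theta = 1 or -1, and assume |y_{k-1}|_p \le |1 - \theta y_k|_p^{-1/2}. Then for all sufficiently small \delta > 0, if |1 - \theta y_k|_p < \epsilon_k (with \epsilon_k defined using this \delta), then the quantity A_k := y_{k+1} - (a_k + \theta b_k)/(2(1 - \theta y_k)) satisfies |A_k|_p \le |1 - \theta y_k|_p^{-1/2} if p < \infty, and |A_k|_\infty \le (11/10)\,|1 - \theta y_k|_\infty^{-1/2} if p = \infty. -/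

import Mathlib

/-- The quantity `ε_n^{-δ}/κ_p`: the maximum over the finite collection of values of
the absolute value `v` of the coefficient combinations entering the definition of the
length scale `ε_n` (equation (eps2) of the paper). -/
noncomputable def epsMax2 (v : ℚ → ℝ) (a b : ℤ → ℚ) (n : ℤ) : ℝ :=
  List.foldr max 0
    [(v 2)⁻¹,
     v (1/2) * v (a n + b n), v (1/2) * v (a n - b n),
     (v (1/2))⁻¹ * (v (a n + b n))⁻¹, (v (1/2))⁻¹ * (v (a n - b n))⁻¹,
     v (a (n + 1)), v (b (n + 1)), v (a (n - 1)), v (b (n - 1)),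
     v (1/2) * v (a (n + 2) + b (n + 2)), v (1/2) * v (a (n + 2) - b (n + 2)),
     v (1/2) * v (a (n - 2) + b (n - 2)), v (1/2) * v (a (n - 2) - b (n - 2)),
     v (a n + b n - 2 * b (n + 1)), v (-a n + b n - 2 * b (n + 1)),
     v (a n + b n - 2 * b (n - 1)), v (-a n + b n - 2 * b (n - 1)),
     (v (a n + b n - 2 * b (n + 1)))⁻¹, (v (-a n + b n - 2 * b (n + 1)))⁻¹,
     (v (a n + b n - 2 * b (n - 1)))⁻¹, (v (-a n + b n - 2 * b (n - 1)))⁻¹,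
     v (a n + b n), v (a n - b n), (v (a n + b n))⁻¹, (v (a n - b n))⁻¹,
     (v (1/2))⁻¹ * (v (a n - b n - (a (n - 2) + b (n - 2) - 2 * b (n - 1))))⁻¹,
     (v (1/2))⁻¹ * (v (a n + b n + (-a (n - 2) + b (n - 2) - 2 * b (n - 1))))⁻¹]

/-- All coefficient combinations entering the definition of `ε_n` are nonzero
(the "k sufficiently large" condition). -/
def EpsNonzero (a b : ℤ → ℚ) (n : ℤ) : Prop :=
  a n + b n ≠ 0 ∧ a n - b n ≠ 0 ∧
  a n + b n - 2 * b (n + 1) ≠ 0 ∧ -a n + b n - 2 * b (n + 1) ≠ 0 ∧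
  a n + b n - 2 * b (n - 1) ≠ 0 ∧ -a n + b n - 2 * b (n - 1) ≠ 0 ∧
  a n - b n - (a (n - 2) + b (n - 2) - 2 * b (n - 1)) ≠ 0 ∧
  a n + b n + (-a (n - 2) + b (n - 2) - 2 * b (n - 1)) ≠ 0

/-!
Write `u = 1 - θ y_k`. Partial fractions split the right-hand side of the recurrence into a part
with a pole at `u = 0`, which `A_k` subtracts, and a part regular there, so that
`A_k = -y_{k-1} + (a_k - θ b_k) / (2 (2 - u))`. Let `M` bound `|2|⁻¹` and `|(a_k - θ b_k) / 2|`,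
as the maximum in the definition of `ε_k` does. For small `u` the denominator `2 - u` has the size
of `2` (nonarchimedean case) or at least `1` (archimedean case), so the regular part is at most `M²`
or `M`, respectively. Since `1 ≤ κ M = ε_k ^ (-δ)` forces `ε_k ≤ 1`, any `δ ≤ 1/4` and `|u| < ε_k`
give `κ M < |u| ^ (-1/4)`, which is enough in both cases; `11/10` is `1 + κ⁻¹` for `κ = 10`.
-/

theorem sub_pole_eq_neg_add_regular_part {K : Type*} [Field K] (h2 : (2 : K) ≠ 0)
    {θ a b x y z : K} (hθ : θ ^ 2 = 1) (hy : y ^ 2 ≠ 1)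
    (hrec : z + x = (a + b * y) / (1 - y ^ 2)) :
    z - (a + θ * b) / (2 * (1 - θ * y)) = -x + 1 / 2 * (a - θ * b) / (2 - (1 - θ * y)) := by
  have hfactor : 1 - y ^ 2 = (1 - y * θ) * (1 + y * θ) := by linear_combination y ^ 2 * hθ
  have hprod : (1 - y * θ) * (1 + y * θ) ≠ 0 := hfactor ▸ sub_ne_zero.2 hy.symm
  have hpole : 1 - y * θ ≠ 0 := left_ne_zero_of_mul hprod
  have hregular : 1 + y * θ ≠ 0 := right_ne_zero_of_mul hprod
  have hpartial : (a + b * y) / (1 - y ^ 2) =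
      (a + θ * b) / (2 * (1 - θ * y)) + 1 / 2 * (a - θ * b) / (1 + θ * y) := by
    rw [hfactor]
    field_simp
    linear_combination (-2 * b * y) * hθ
  rw [show 2 - (1 - θ * y) = 1 + θ * y by ring]
  linear_combination hrec + hpartial

section RegularPart

variable {K : Type*} [Field K] (v : AbsoluteValue K ℝ) {c u : K} {M : ℝ}

theorem map_regular_part_le_sq (hv : IsNonarchimedean v) (h2 : (2 : K) ≠ 0) (hM : (v 2)⁻¹ ≤ M)
    (hc : v (1 / 2) * v c ≤ M) (hu : v u < v 2) : v (1 / 2 * c / (2 - u)) ≤ M ^ 2 := by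
  have h_denom : v (2 - u) = v 2 := by
    rw [sub_eq_add_neg]
    exact hv.add_eq_left_of_lt (by rwa [map_neg_eq_map])
  calc v (1 / 2 * c / (2 - u)) = v (1 / 2) * v c * (v 2)⁻¹ := by
        rw [map_div₀, map_mul, h_denom, div_eq_mul_inv]
    _ ≤ M * M := by gcongr; exact (inv_pos.2 (v.pos h2)).le.trans hM
    _ = M ^ 2 := (sq M).symm

theorem map_regular_part_le (hv : v 2 = 2) (hc : v (1 / 2) * v c ≤ M) (hu : v u ≤ 1) :
    v (1 / 2 * c / (2 - u)) ≤ M := by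
  have h_denom : 1 ≤ v (2 - u) := by linarith [v.le_sub 2 u]
  calc v (1 / 2 * c / (2 - u)) = v (1 / 2) * v c / v (2 - u) := by rw [map_div₀, map_mul]
    _ ≤ v (1 / 2) * v c := div_le_self (by positivity) h_denom
    _ ≤ M := hc

end RegularPart

theorem lt_rpow_neg_of_le_rpow_neg {u ε δ c L : ℝ} (hu : 0 < u) (huε : u < ε) (hδ : 0 < δ)
    (hδc : δ ≤ c) (hL : 1 ≤ L) (hLε : L ≤ ε ^ (-δ)) : L < u ^ (-c) := by
  have hε1 : ε ≤ 1 := by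
    by_contra! hε
    exact (hL.trans hLε).not_gt (Real.rpow_lt_one_of_one_lt_of_neg hε (neg_lt_zero.2 hδ))
  calc L ≤ ε ^ (-δ) := hLε
    _ < u ^ (-δ) := Real.rpow_lt_rpow_of_neg hu huε (neg_lt_zero.2 hδ)
    _ ≤ u ^ (-c) := Real.rpow_le_rpow_of_exponent_ge hu (huε.le.trans hε1) (neg_le_neg hδc)

section RegularPartRpow

variable {K : Type*} [Field K] (v : AbsoluteValue K ℝ) {c u : K} {κ δ ε M : ℝ}

theorem map_regular_part_le_rpow_of_isNonarchimedean (hv : IsNonarchimedean v)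
    (h2 : (2 : K) ≠ 0) (hu : u ≠ 0) (hκ : 1 ≤ κ) (hδ : 0 < δ) (hδ' : δ ≤ 1 / 4)
    (hM : (v 2)⁻¹ ≤ M) (hc : v (1 / 2) * v c ≤ M) (hε : κ * M ≤ ε ^ (-δ)) (huε : v u < ε) :
    v (1 / 2 * c / (2 - u)) ≤ v u ^ (-(1 / 2) : ℝ) := by
  have hu_pos : 0 < v u := v.pos hu
  have h2_pos : 0 < v 2 := v.pos h2
  have h2_le : v 2 ≤ 1 := mod_cast hv.apply_natCast_le_one (n := 2)
  have hM1 : 1 ≤ M := ((one_le_inv₀ h2_pos).2 h2_le).trans hM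
  have hMε : M ≤ ε ^ (-δ) := (le_mul_of_one_le_left (by positivity) hκ).trans hε
  have hM_lt {s : ℝ} (hs : 1 / 4 ≤ s) : M < v u ^ (-s) :=
    lt_rpow_neg_of_le_rpow_neg hu_pos huε hδ (hδ'.trans hs) hM1 hMε
  have hu2 : v u < v 2 := by
    have h := hM.trans_lt (hM_lt (s := 1) (by norm_num))
    rwa [Real.rpow_neg_one, inv_lt_inv₀ h2_pos hu_pos] at h
  calc v (1 / 2 * c / (2 - u)) ≤ M ^ 2 := map_regular_part_le_sq v hv h2 hM hc hu2
    _ ≤ (v u ^ (-(1 / 4) : ℝ)) ^ 2 := by gcongr; exact (hM_lt le_rfl).le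
    _ = v u ^ (-(1 / 2) : ℝ) := by rw [← Real.rpow_mul_natCast hu_pos.le]; norm_num

theorem map_regular_part_le_inv_mul_rpow (hv : v 2 = 2) (hu : u ≠ 0) (hκ : 2 ≤ κ)
    (hδ : 0 < δ) (hδ' : δ ≤ 1 / 2) (hM : (v 2)⁻¹ ≤ M) (hc : v (1 / 2) * v c ≤ M)
    (hε : κ * M ≤ ε ^ (-δ)) (huε : v u < ε) :
    v (1 / 2 * c / (2 - u)) ≤ κ⁻¹ * v u ^ (-(1 / 2) : ℝ) := by
  have hu_pos : 0 < v u := v.pos hu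
  have hκM : 1 ≤ κ * M := by
    rw [hv] at hM
    calc (1 : ℝ) = 2 * 2⁻¹ := by norm_num
      _ ≤ κ * M := by gcongr
  have hκM_lt {s : ℝ} (hs : 1 / 2 ≤ s) : κ * M < v u ^ (-s) :=
    lt_rpow_neg_of_le_rpow_neg hu_pos huε hδ (hδ'.trans hs) hκM hε
  have hu1 : v u < 1 := by
    have h := hκM.trans_lt (hκM_lt (s := 1) (by norm_num))
    rwa [Real.rpow_neg_one, one_lt_inv₀ hu_pos] at h
  calc v (1 / 2 * c / (2 - u)) ≤ M := map_regular_part_le v hv hc hu1.le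
    _ ≤ κ⁻¹ * v u ^ (-(1 / 2) : ℝ) :=
      (le_inv_mul_iff₀ (by positivity)).2 (hκM_lt le_rfl).le

end RegularPartRpow

theorem singular_confinement_Ak_general {K : Type*} [Field K] (v : AbsoluteValue K ℝ)
    (h2 : (2 : K) ≠ 0) {θ a b x y z : K} (hθ : θ ^ 2 = 1) (hy : y ^ 2 ≠ 1)
    (hrec : z + x = (a + b * y) / (1 - y ^ 2))
    (hx : v x ≤ v (1 - θ * y) ^ (-(1 / 2) : ℝ)) {κ δ ε M : ℝ} (hδ : 0 < δ) (hδ' : δ ≤ 1 / 4)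
    (hM : (v 2)⁻¹ ≤ M) (hc : v (1 / 2) * v (a - θ * b) ≤ M) (hε : κ * M ≤ ε ^ (-δ))
    (huε : v (1 - θ * y) < ε) :
    (IsNonarchimedean v → 1 ≤ κ →
        v (z - (a + θ * b) / (2 * (1 - θ * y))) ≤ v (1 - θ * y) ^ (-(1 / 2) : ℝ)) ∧
      (v 2 = 2 → 2 ≤ κ →
        v (z - (a + θ * b) / (2 * (1 - θ * y))) ≤
          (1 + κ⁻¹) * v (1 - θ * y) ^ (-(1 / 2) : ℝ)) := by
  have hu : 1 - θ * y ≠ 0 := fun hu ↦ hy (by linear_combination -y ^ 2 * hθ - (1 + θ * y) * hu)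
  rw [sub_pole_eq_neg_add_regular_part h2 hθ hy hrec]
  constructor
  · intro hv hκ
    refine (hv _ _).trans (max_le (by rwa [v.map_neg]) ?_)
    exact map_regular_part_le_rpow_of_isNonarchimedean v hv h2 hu hκ hδ hδ' hM hc hε huε
  · intro hv hκ
    rw [one_add_mul]
    refine (v.add_le _ _).trans (add_le_add (by rwa [v.map_neg]) ?_)
    exact map_regular_part_le_inv_mul_rpow v hv hu hκ hδ (by linarith) hM hc hε huε

section EpsMax

variable (v : ℚ → ℝ) (a b : ℤ → ℚ) (n : ℤ)

theorem inv_two_le_epsMax2 : (v 2)⁻¹ ≤ epsMax2 v a b n :=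
  le_max_left _ _

theorem half_mul_sub_le_epsMax2 {θ : ℚ} (hθ : θ = 1 ∨ θ = -1) :
    v (1 / 2) * v (a n - θ * b n) ≤ epsMax2 v a b n := by
  rcases hθ with rfl | rfl
  · rw [one_mul]
    exact le_max_of_le_right (le_max_of_le_right (le_max_left _ _))
  · rw [neg_one_mul, sub_neg_eq_add]
    exact le_max_of_le_right (le_max_left _ _)

end EpsMax

section RationalPlaces

variable {v : ℚ → ℝ}

theorem isNonarchimedean_of_eq_padicNorm
    (hv : ∃ p : ℕ, p.Prime ∧ ∀ x : ℚ, v x = ((padicNorm p x : ℚ) : ℝ)) : IsNonarchimedean v := by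
  obtain ⟨p, hp, hv⟩ := hv
  have : Fact p.Prime := ⟨hp⟩
  intro x y
  simp only [hv]
  exact mod_cast padicNorm.nonarchimedean

theorem exists_absoluteValue_of_place {κ : ℝ}
    (hv : ((∃ p : ℕ, p.Prime ∧ ∀ x : ℚ, v x = ((padicNorm p x : ℚ) : ℝ)) ∧ κ = 1) ∨
      ((∀ x : ℚ, v x = |(x : ℝ)|) ∧ κ = 10)) :
    ∃ w : AbsoluteValue ℚ ℝ, ⇑w = v ∧ 1 ≤ κ ∧ (w 2 = 2 → κ = 10) := by
  rcases hv with ⟨⟨p, hp, hv⟩, rfl⟩ | ⟨hv, rfl⟩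
  · have : Fact p.Prime := ⟨hp⟩
    refine ⟨Rat.AbsoluteValue.padic p, (funext hv).symm, le_rfl, fun h ↦ ?_⟩
    have h_le : Rat.AbsoluteValue.padic p 2 ≤ 1 := mod_cast Rat.AbsoluteValue.padic_le_one p 2
    linarith
  · refine ⟨Rat.AbsoluteValue.real, ?_, by norm_num, fun _ ↦ rfl⟩
    ext x
    rw [hv, Rat.AbsoluteValue.real_eq_abs, Rat.cast_abs]

end RationalPlaces

/-- Theorem 2 (i): estimate for
`A_k = y_{k+1} - (a_k + θ b_k)/(2(1 - θ y_k))`. -/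
theorem singular_confinement_Ak (v : ℚ → ℝ) (κ : ℝ)
    (hv : ((∃ p : ℕ, p.Prime ∧ ∀ x : ℚ, v x = ((padicNorm p x : ℚ) : ℝ)) ∧ κ = 1) ∨
          ((∀ x : ℚ, v x = |(x : ℝ)|) ∧ κ = 10))
    (a b y : ℤ → ℚ) (k : ℤ)
    (hy : ∀ n : ℤ, k - 1 ≤ n → n ≤ k + 3 → y n ≠ 1 ∧ y n ≠ -1)
    (heq : ∀ n : ℤ, k ≤ n → n ≤ k + 2 →
      y (n + 1) + y (n - 1) = (a n + b n * y n) / (1 - y n ^ 2))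
    (hirr : ∀ n : ℤ, k - 2 ≤ n → n ≤ k + 2 → a n + b n ≠ 0 ∧ a n - b n ≠ 0)
    (hnz : EpsNonzero a b k)
    (θ : ℚ) (hθ : θ = 1 ∨ θ = -1)
    (hkm : v (y (k - 1)) ≤ v (1 - θ * y k) ^ (-(1/2) : ℝ)) :
    ∃ δ0 : ℝ, 0 < δ0 ∧ ∀ δ : ℝ, 0 < δ → δ < δ0 → ∀ ε : ℝ, 0 < ε →
      ε ^ (-δ) = κ * epsMax2 v a b k →
      v (1 - θ * y k) < ε →
      (((∃ p : ℕ, p.Prime ∧ ∀ x : ℚ, v x = ((padicNorm p x : ℚ) : ℝ)) →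
          v (y (k + 1) - (a k + θ * b k) / (2 * (1 - θ * y k)))
            ≤ v (1 - θ * y k) ^ (-(1/2) : ℝ)) ∧
       ((∀ x : ℚ, v x = |(x : ℝ)|) →
          v (y (k + 1) - (a k + θ * b k) / (2 * (1 - θ * y k)))
            ≤ 11/10 * v (1 - θ * y k) ^ (-(1/2) : ℝ))) := by
  obtain ⟨w, rfl, hκ, hκ_real⟩ := exists_absoluteValue_of_place hv
  refine ⟨1 / 4, by norm_num, fun δ hδ hδ' ε _ hε huε ↦ ?_⟩
  have hyk : y k ^ 2 ≠ 1 := sq_ne_one_iff.2 (hy k (by omega) (by omega))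
  obtain ⟨h_nonarch, h_arch⟩ := singular_confinement_Ak_general w two_ne_zero
    (sq_eq_one_iff.2 hθ) hyk (heq k le_rfl (by omega)) hkm hδ hδ'.le
    (inv_two_le_epsMax2 w a b k) (half_mul_sub_le_epsMax2 w a b k hθ) hε.ge huε
  refine ⟨fun hp ↦ h_nonarch (isNonarchimedean_of_eq_padicNorm hp) hκ, fun h_abs ↦ ?_⟩
  have hw2 : w 2 = 2 := by simp [h_abs]
  obtain rfl := hκ_real hw2
  exact (h_arch hw2 (by norm_num)).trans_eq (by norm_num)
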